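/- Let G be a weighted graph with terminal set K of size k, fix a terminal v_k ∈ K, and let 𝒰 be the collection of nonempty subsets U ⊆ K with v_k ∉ U. The number of families X ⊆ 𝒰 with A(X) ≠ ∅ is at most M(k−1), the number of antichains in the power set of the (k−1)-element set K \ {v_k} ordered by inclusion. Consequently, the partition of V into the nonempty sets A(X) has at most M(k−1) classes. -/

import Mathlib

open scoped Classical

/-- A weighted graph with a distinguished embedded set of terminals indexed by `κ`:
a finite vertex type `V`, an embedding `ι : κ ↪ V` of the terminals, and a symmetric
nonnegative capacity function `c` on pairs of vertices. -/
structure WeightedGraph (κ : Type) where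
  V : Type
  [fintypeV : Fintype V]
  ι : κ ↪ V
  c : V → V → ℝ
  symm : ∀ u v, c u v = c v u
  nonneg : ∀ u v, 0 ≤ c u v

namespace WeightedGraph

variable {κ : Type}

instance (G : WeightedGraph κ) : Fintype G.V := G.fintypeV

/-- The cut function `h_G(A) = Σ_{u ∈ A, v ∉ A} c(u,v)`. -/
noncomputable def cutval (G : WeightedGraph κ) (A : Finset G.V) : ℝ :=
  ∑ u ∈ A, ∑ v ∈ Aᶜ, G.c u v

/-- The vertex sets realizing the terminal partition `(U, K \ U)`. -/
noncomputable def cutSets (G : WeightedGraph κ) (U : Finset κ) : Finset (Finset G.V) :=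
  Finset.univ.filter fun A => ∀ x : κ, G.ι x ∈ A ↔ x ∈ U

theorem cutSets_nonempty (G : WeightedGraph κ) (U : Finset κ) : (G.cutSets U).Nonempty := by
  refine ⟨U.image G.ι, ?_⟩
  simp [cutSets, Finset.mem_image, G.ι.injective.eq_iff]

/-- The terminal cut function `h_K^G(U) = min { h_G(A) : A ∩ K = U }`. -/
noncomputable def termCut (G : WeightedGraph κ) (U : Finset κ) : ℝ :=
  (G.cutSets U).inf' (G.cutSets_nonempty U) G.cutval

/-- `H` is a mimicking network for `(G, K)`: all minimum terminal cut values agree. -/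
def IsMimicking (G H : WeightedGraph κ) : Prop :=
  ∀ U : Finset κ, H.termCut U = G.termCut U

/-- `H` is a quotient (contraction) of `G` along the surjection `f`: terminals map to
terminals, and capacities between distinct classes are sums of the original capacities. -/
def IsQuotient (G H : WeightedGraph κ) (f : G.V → H.V) : Prop :=
  Function.Surjective f ∧ (∀ x : κ, f (G.ι x) = H.ι x) ∧
    ∀ y z : H.V, y ≠ z →
      H.c y z = ∑ u ∈ Finset.univ.filter (fun u => f u = y),
        ∑ v ∈ Finset.univ.filter (fun v => f v = z), G.c u v

end WeightedGraph

/-- `A` is a minimum-cardinality minimizer realizing the minimum terminal cut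
`h_K^G(U)`: it induces the terminal partition `(U, K \ U)`, achieves the minimum cut
value, and has minimum cardinality among all such minimizers. -/
def WeightedGraph.IsMinCutSet {κ : Type} (G : WeightedGraph κ) (U : Finset κ)
    (A : Finset G.V) : Prop :=
  (∀ x : κ, G.ι x ∈ A ↔ x ∈ U) ∧ G.cutval A = G.termCut U ∧
    ∀ B : Finset G.V, (∀ x : κ, G.ι x ∈ B ↔ x ∈ U) → G.cutval B = G.termCut U →
      A.card ≤ B.card

/-- `𝒰`: the collection of nonempty subsets `U ⊆ K` not containing the fixed
terminal `t` (= `v_k`). -/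
noncomputable def terminalSubsets (κ : Type) [Fintype κ] (t : κ) : Finset (Finset κ) :=
  Finset.univ.filter fun U : Finset κ => U.Nonempty ∧ t ∉ U

/-- `A(X) = (∩_{Z ∈ X} S(Z)) ∩ (∩_{W ∈ 𝒰 \ X} (V \ S(W)))`, the cluster of vertices
lying inside `S(Z)` exactly for the members `Z` of the family `X ⊆ 𝒰`. -/
noncomputable def region {κ : Type} [Fintype κ] (G : WeightedGraph κ) (t : κ)
    (S : Finset κ → Finset G.V) (X : Finset (Finset κ)) : Finset G.V :=
  Finset.univ.filter fun v : G.V =>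
    (∀ Z ∈ X, v ∈ S Z) ∧ ∀ W ∈ terminalSubsets κ t \ X, v ∉ S W

/-- The `n`-th Dedekind number: the number of antichains in the power set of an
`n`-element set ordered by inclusion. -/
noncomputable def dedekind (n : ℕ) : ℕ :=
  Nat.card {A : Finset (Finset (Fin n)) // IsAntichain (· ⊆ ·) (A : Set (Finset (Fin n)))}

/-!
Cut functions are submodular, so uncrossing makes the minimum cuts nested: a minimum-cardinality
minimum cut for `U` lies inside every minimum cut for any `W ⊇ U`. Hence the family
`{U ∈ 𝒰 | v ∈ S U}` determined by a vertex `v` is an upper set of `𝒰`, and these are exactly the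
families whose region is nonempty. Since `𝒰` embeds in the power set of a `(k - 1)`-element set, it
has at most as many upper sets as that power set, whose upper sets correspond to its antichains
through their minimal elements.
-/

section UpperSets

variable {α β : Type*}

theorem upperClosure_setOf_minimal [PartialOrder α] [WellFoundedLT α] (s : UpperSet α) :
    upperClosure {a | Minimal (· ∈ s) a} = s := by
  ext a
  simp only [SetLike.mem_coe, mem_upperClosure, Set.mem_ofPred_eq]
  constructor
  · rintro ⟨m, hm, hma⟩
    exact s.upper hma hm.prop
  · intro ha
    obtain ⟨m, hma, hm⟩ := exists_minimal_le_of_wellFoundedLT (· ∈ s) a ha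
    exact ⟨m, hm, hma⟩

/-- The bijection between upper sets and antichains of a well-founded order, sending an upper set
to its minimal elements and an antichain to its upper closure. -/
def upperSetEquivAntichain (α : Type*) [PartialOrder α] [WellFoundedLT α] :
    UpperSet α ≃ {A : Set α // IsAntichain (· ≤ ·) A} where
  toFun s := ⟨{a | Minimal (· ∈ s) a}, setOfPred_minimal_antichain _⟩
  invFun A := upperClosure A.1
  left_inv := upperClosure_setOf_minimal
  right_inv A := Subtype.ext <| Set.ext fun _ ↦ A.2.minimal_mem_upperClosure_iff_mem

theorem upperClosure_image_injective [Preorder α] [Preorder β] (f : α ↪o β) :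
    Function.Injective fun s : UpperSet α ↦ upperClosure (f '' s) := by
  have mem_iff (s : UpperSet α) (a : α) : f a ∈ upperClosure (f '' s) ↔ a ∈ s := by
    simp only [mem_upperClosure, Set.exists_mem_image, f.le_iff_le]
    exact ⟨fun ⟨b, hb, hba⟩ ↦ s.upper hba hb, fun ha ↦ ⟨a, ha, le_rfl⟩⟩
  intro s s' h
  ext a
  exact (mem_iff s a).symm.trans (SetLike.ext_iff.mp h (f a) |>.trans (mem_iff s' a))

theorem card_upperSet_le_of_orderEmbedding [Preorder α] [Preorder β] [Finite β] (f : α ↪o β) :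
    Nat.card (UpperSet α) ≤ Nat.card (UpperSet β) :=
  Nat.card_le_card_of_injective _ (upperClosure_image_injective f)

theorem card_le_card_upperSet_of_isRelUpperSet [Preorder α] {P : α → Prop} [Finite (Subtype P)]
    (F : Finset (Finset α)) (hF : ∀ X ∈ F, IsRelUpperSet (X : Set α) P) :
    F.card ≤ Nat.card (UpperSet (Subtype P)) := by
  let restrict (X : F) : UpperSet (Subtype P) :=
    ⟨{a | a.1 ∈ X.1}, fun a b hab ha ↦ (hF X X.2).mem_of_le ha hab b.2⟩
  have restrict_injective : Function.Injective restrict := by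
    intro X Y hXY
    have mem_iff (a : α) (ha : P a) : a ∈ X.1 ↔ a ∈ Y.1 :=
      SetLike.ext_iff.mp hXY ⟨a, ha⟩
    ext a
    exact ⟨fun h ↦ (mem_iff a ((hF X X.2).prop_of_mem h)).mp h,
      fun h ↦ (mem_iff a ((hF Y Y.2).prop_of_mem h)).mpr h⟩
  simpa using Nat.card_le_card_of_injective restrict restrict_injective

end UpperSets

theorem subtype_subset_subtype_iff {α : Type*} {p : α → Prop} [DecidablePred p] {s t : Finset α}
    (hs : ∀ a ∈ s, p a) : s.subtype p ⊆ t.subtype p ↔ s ⊆ t :=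
  ⟨fun h a ha ↦ Finset.mem_subtype.mp (h (Finset.mem_subtype (a := ⟨a, hs a ha⟩).mpr ha)),
    fun h ↦ Finset.subtype_mono h⟩

section Dedekind

theorem dedekind_eq_card_upperSet (n : ℕ) : dedekind n = Nat.card (UpperSet (Finset (Fin n))) :=
  Nat.card_congr <|
    (Fintype.finsetEquivSet.subtypeEquiv fun A ↦ by simp).trans
      (upperSetEquivAntichain (Finset (Fin n))).symm

variable {κ : Type} [Fintype κ]

theorem card_upperSet_terminalSubsets_le_dedekind (t : κ) :
    Nat.card (UpperSet {U // U ∈ terminalSubsets κ t}) ≤ dedekind (Fintype.card κ - 1) := by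
  have notMem (U : {U // U ∈ terminalSubsets κ t}) : t ∉ U.1 := (Finset.mem_filter.mp U.2).2.2
  let removeTerminal : {U // U ∈ terminalSubsets κ t} ↪o Finset {x // x ≠ t} :=
    .ofMapLEIff (fun U ↦ U.1.subtype (· ≠ t)) fun U _ ↦
      subtype_subset_subtype_iff fun x hx ↦ ne_of_mem_of_not_mem hx (notMem U)
  let enumerate : {x // x ≠ t} ≃ Fin (Fintype.card κ - 1) := Fintype.equivFinOfCardEq (by simp)
  rw [dedekind_eq_card_upperSet]
  exact card_upperSet_le_of_orderEmbedding
    (removeTerminal.trans (Finset.mapEmbedding enumerate.toEmbedding))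

theorem card_le_dedekind_of_isRelUpperSet (t : κ) (F : Finset (Finset (Finset κ)))
    (hF : ∀ X ∈ F, IsRelUpperSet (X : Set (Finset κ)) (· ∈ terminalSubsets κ t)) :
    F.card ≤ dedekind (Fintype.card κ - 1) :=
  calc
    F.card ≤ Nat.card (UpperSet {U // U ∈ terminalSubsets κ t}) :=
      card_le_card_upperSet_of_isRelUpperSet F hF
    _ ≤ dedekind (Fintype.card κ - 1) := card_upperSet_terminalSubsets_le_dedekind t

end Dedekind

namespace WeightedGraph

variable {κ : Type} (G : WeightedGraph κ)

theorem cutval_eq_sum_ite (A : Finset G.V) :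
    G.cutval A = ∑ u, ∑ v, if u ∈ A ∧ v ∉ A then G.c u v else 0 := by
  simp only [cutval, ite_and, ← Finset.mem_compl, Finset.sum_ite_irrel, Finset.sum_const_zero,
    Finset.sum_ite_mem, Finset.univ_inter]

theorem cutval_inter_add_cutval_union_le (A B : Finset G.V) :
    G.cutval (A ∩ B) + G.cutval (A ∪ B) ≤ G.cutval A + G.cutval B := by
  simp only [cutval_eq_sum_ite, ← Finset.sum_add_distrib]
  refine Finset.sum_le_sum fun u _ ↦ Finset.sum_le_sum fun v _ ↦ ?_
  have := G.nonneg u v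
  grind

variable {G} {U W : Finset κ} {A B : Finset G.V}

theorem mem_cutSets : A ∈ G.cutSets U ↔ ∀ x, G.ι x ∈ A ↔ x ∈ U := by
  simp [cutSets]

theorem termCut_le_cutval (hA : A ∈ G.cutSets U) : G.termCut U ≤ G.cutval A :=
  Finset.inf'_le _ hA

theorem IsMinCutSet.subset_of_cutval_eq_termCut (hA : G.IsMinCutSet U A)
    (hB : B ∈ G.cutSets W) (hBcut : G.cutval B = G.termCut W) (hUW : U ⊆ W) : A ⊆ B := by
  obtain ⟨hAU, hAcut, hAcard⟩ := hA
  have hBW := mem_cutSets.mp hB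
  have inter_mem : A ∩ B ∈ G.cutSets U := mem_cutSets.mpr fun x ↦ by grind
  have union_mem : A ∪ B ∈ G.cutSets W := mem_cutSets.mpr fun x ↦ by grind
  have inter_cutval : G.cutval (A ∩ B) = G.termCut U := by
    linarith [G.cutval_inter_add_cutval_union_le A B, termCut_le_cutval inter_mem,
      termCut_le_cutval union_mem]
  have card_le : A.card ≤ (A ∩ B).card := hAcard _ (mem_cutSets.mp inter_mem) inter_cutval
  exact Finset.inter_eq_left.mp (Finset.eq_of_subset_of_card_le Finset.inter_subset_left card_le)

theorem monotoneOn_of_isMinCutSet {𝒟 : Set (Finset κ)} {S : Finset κ → Finset G.V}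
    (hS : ∀ U ∈ 𝒟, G.IsMinCutSet U (S U)) : MonotoneOn S 𝒟 := fun U hU W hW hUW ↦
  (hS U hU).subset_of_cutval_eq_termCut (mem_cutSets.mpr (hS W hW).1) (hS W hW).2.1 hUW

end WeightedGraph

theorem isRelUpperSet_of_region_nonempty {κ : Type} [Fintype κ] {G : WeightedGraph κ} {t : κ}
    {S : Finset κ → Finset G.V} (hS : MonotoneOn S (terminalSubsets κ t))
    {X : Finset (Finset κ)} (hX : X ⊆ terminalSubsets κ t) (hne : (region G t S X).Nonempty) :
    IsRelUpperSet (X : Set (Finset κ)) (· ∈ terminalSubsets κ t) := by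
  obtain ⟨v, hv⟩ := hne
  obtain ⟨-, hmem, hnotMem⟩ := Finset.mem_filter.mp hv
  refine fun Z hZ ↦ ⟨hX hZ, fun W hZW hW ↦ ?_⟩
  by_contra hWX
  exact hnotMem W (Finset.mem_sdiff.mpr ⟨hW, hWX⟩) (hS (hX hZ) hW hZW (hmem Z hZ))

theorem region_count_le_dedekind_general {κ : Type} [Fintype κ] (G : WeightedGraph κ)
    (t : κ) (S : Finset κ → Finset G.V) (hS : MonotoneOn S (terminalSubsets κ t)) :
    (Finset.univ.filter fun X : Finset (Finset κ) =>
        X ⊆ terminalSubsets κ t ∧ (region G t S X).Nonempty).card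
      ≤ dedekind (Fintype.card κ - 1) ∧
    ((Finset.univ.filter fun X : Finset (Finset κ) =>
        X ⊆ terminalSubsets κ t ∧ (region G t S X).Nonempty).image
          (region G t S)).card ≤ dedekind (Fintype.card κ - 1) := by
  have families_le := card_le_dedekind_of_isRelUpperSet t
    (Finset.univ.filter fun X ↦ X ⊆ terminalSubsets κ t ∧ (region G t S X).Nonempty)
    fun X hX ↦ isRelUpperSet_of_region_nonempty hS (Finset.mem_filter.mp hX).2.1
      (Finset.mem_filter.mp hX).2.2
  exact ⟨families_le, Finset.card_image_le.trans families_le⟩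

/-- the number of families `X ⊆ 𝒰` with `A(X) ≠ ∅` is at most the
Dedekind number `M(k-1)`; consequently the partition of `V` into nonempty regions
`A(X)` has at most `M(k-1)` classes. -/
theorem region_count_le_dedekind {κ : Type} [Fintype κ] (G : WeightedGraph κ)
    (t : κ) (S : Finset κ → Finset G.V)
    (hS : ∀ U ∈ terminalSubsets κ t, G.IsMinCutSet U (S U)) :
    (Finset.univ.filter fun X : Finset (Finset κ) =>
        X ⊆ terminalSubsets κ t ∧ (region G t S X).Nonempty).card
      ≤ dedekind (Fintype.card κ - 1) ∧
    ((Finset.univ.filter fun X : Finset (Finset κ) =>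
        X ⊆ terminalSubsets κ t ∧ (region G t S X).Nonempty).image
          (region G t S)).card ≤ dedekind (Fintype.card κ - 1) :=
  region_count_le_dedekind_general G t S (WeightedGraph.monotoneOn_of_isMinCutSet hS)
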